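/- Let {β_k} and {γ_k} be nonnegative sequences with γ_k = 1/(k+1)^ε for some ε ∈ (0,1], Σ_{k=0}^∞ γ_k β_k < ∞, and |β_{k+1} − β_k| ≤ M γ_k for all k and some constant M > 0. Then lim_{k→∞} β_k = 0. -/

import Mathlib

open Filter Topology

/-!
Fix `δ > 0` and truncate `β` from below at `δ`. The truncated sequence can only decrease at indices
where `δ < β k`, and there the drop is at most `M * γ k ≤ M / δ * (γ k * β k)`, which is summable.
Since `γ` is not summable, `β` returns below `δ` infinitely often, so
`β k ≤ δ + M / δ * ∑_{i ≥ k} γ i * β i` for every `k`, and the tails on the right tend to zero.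
-/

theorem le_add_tsum_nat_add_of_frequently_le {f e : ℕ → ℝ} {L : ℝ}
    (hdrop : ∀ k, f k - f (k + 1) ≤ e k) (he : Summable e) (hL : ∃ᶠ n in atTop, f n ≤ L) (k : ℕ) :
    f k ≤ L + ∑' i, e (i + k) := by
  have hmono : Monotone fun n => f n + ∑ i ∈ Finset.range n, e i :=
    monotone_nat_of_le_succ fun n => by
      rw [Finset.sum_range_succ]
      linarith [hdrop n]
  have hfreq : ∃ᶠ n in atTop,
      f k + ∑ i ∈ Finset.range k, e i ≤ L + ∑ i ∈ Finset.range n, e i :=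
    (hL.and_eventually (eventually_ge_atTop k)).mono fun n ⟨hn, hkn⟩ =>
      (hmono hkn).trans (add_le_add hn le_rfl)
  have hlim : f k + ∑ i ∈ Finset.range k, e i ≤ L + ∑' i, e i :=
    ge_of_tendsto_of_frequently (he.hasSum.tendsto_sum_nat.const_add L) hfreq
  linarith [he.sum_add_tsum_nat_add k]

theorem max_sub_max_le_div_mul {a b c δ : ℝ} (ha : 0 ≤ a) (hc : 0 ≤ c) (hδ : 0 < δ)
    (h : a - b ≤ c) : max a δ - max b δ ≤ a / δ * c := by
  rcases le_total a δ with haδ | hδa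
  · calc max a δ - max b δ ≤ 0 := by
          rw [max_eq_right haδ]
          exact sub_nonpos.2 (le_max_right b δ)
      _ ≤ a / δ * c := by positivity
  · calc max a δ - max b δ ≤ a - b := by
          rw [max_eq_left hδa]
          exact sub_le_sub_left (le_max_left b δ) a
      _ ≤ c := h
      _ ≤ a / δ * c := le_mul_of_one_le_left hc ((one_le_div hδ).2 hδa)

theorem frequently_lt_of_summable_mul_of_not_summable {β γ : ℕ → ℝ} {δ : ℝ} (hδ : 0 < δ)
    (hγ : ∀ k, 0 ≤ γ k) (hγsum : ¬ Summable γ) (hsum : Summable fun k => γ k * β k) :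
    ∃ᶠ k in atTop, β k < δ := by
  intro hge
  refine hγsum (.of_norm_bounded_eventually_nat (hsum.div_const δ) ?_)
  filter_upwards [hge] with k hk
  rw [Real.norm_of_nonneg (hγ k), le_div_iff₀ hδ]
  exact mul_le_mul_of_nonneg_left (not_lt.1 hk) (hγ k)

theorem not_summable_one_div_add_one_rpow {ε : ℝ} (hε : ε ≤ 1) :
    ¬ Summable fun k : ℕ => 1 / ((k : ℝ) + 1) ^ ε := by
  intro h
  refine hε.not_gt ((Real.summable_one_div_nat_add_rpow 1 ε).1 (h.congr fun k => ?_))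
  rw [abs_of_pos k.cast_add_one_pos]

theorem stmt4_general {β γ : ℕ → ℝ} {M : ℝ} (hM : 0 ≤ M) (hβ : ∀ k, 0 ≤ β k)
    (hγ : ∀ k, 0 ≤ γ k) (hγsum : ¬ Summable γ) (hsum : Summable fun k => γ k * β k)
    (hdrop : ∀ k, β k - β (k + 1) ≤ M * γ k) :
    Tendsto β atTop (𝓝 0) := by
  refine tendsto_order.2 ⟨fun a ha => .of_forall fun k => ha.trans_le (hβ k), fun η hη => ?_⟩
  obtain ⟨δ, hδ, hδη⟩ := exists_between hη
  have hdrop_max (k : ℕ) : max (β k) δ - max (β (k + 1)) δ ≤ M / δ * (γ k * β k) :=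
    (max_sub_max_le_div_mul (hβ k) (mul_nonneg hM (hγ k)) hδ (hdrop k)).trans_eq (by ring)
  have hfreq : ∃ᶠ k in atTop, max (β k) δ ≤ δ :=
    (frequently_lt_of_summable_mul_of_not_summable hδ hγ hγsum hsum).mono fun k hk =>
      max_le hk.le le_rfl
  have hbound := le_add_tsum_nat_add_of_frequently_le hdrop_max (hsum.mul_left (M / δ)) hfreq
  have htail := tendsto_sum_nat_add fun k => M / δ * (γ k * β k)
  filter_upwards [htail.eventually_lt_const (sub_pos.2 hδη)] with k hk
  calc β k ≤ max (β k) δ := le_max_left _ _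
    _ ≤ δ + ∑' i, M / δ * (γ (i + k) * β (i + k)) := hbound k
    _ < η := lt_sub_iff_add_lt'.1 hk

theorem stmt4 (β γ : ℕ → ℝ) (ε M : ℝ) (hε : 0 < ε) (hε1 : ε ≤ 1)
    (hβ : ∀ k, 0 ≤ β k)
    (hγ : ∀ k : ℕ, γ k = 1 / ((k : ℝ) + 1) ^ ε)
    (hsum : Summable (fun k => γ k * β k))
    (hM : 0 < M)
    (hdiff : ∀ k, |β (k + 1) - β k| ≤ M * γ k) :
    Tendsto β atTop (𝓝 0) := by
  obtain rfl := funext hγ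
  exact stmt4_general hM.le hβ (fun k => by positivity) (not_summable_one_div_add_one_rpow hε1)
    hsum fun k => (le_abs_self _).trans ((abs_sub_comm _ _).trans_le (hdiff k))
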